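/- arXiv:2304.08311 — 2 statements merged into one kernel-verified Lean document; each statement's English description precedes it below -/
import Mathlib

section
/- Let ρ > 0, χ = −π/2 (so cosχ = 0, sinχ = −1), and K = 0. Then for every choice of signs ε₁, ε₃ ∈ {+1,−1}, the quadruple (x₁, x₂, x₃, λ) with x₁ = ε₁√(2(ρ+2)/(5+3ρ)), x₂ = 0, x₃ = ε₃√((ρ+1)/(5+3ρ)), and λ = −(ρ+1)x₃ solves the equilibrium system: ρcosχ·x₂x₃ − 2Kx₁x₂ + (ρsinχ−1)x₁x₃ = λx₁; ρcosχ·x₁x₃ − K(x₁²−x₂²) − (ρsinχ+1)x₂x₃ = λx₂; ρcosχ·x₁x₂ − (x₂²−x₃²) + (1/2)(ρsinχ−1)(x₁²−x₂²) = λx₃; x₁²+x₂²+x₃² = 1. -/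
open Real

/-- The equilibrium system for the oriented octupolar potential with
parameters `(ρ, χ, K)`, unknowns `(x₁, x₂, x₃)` and Lagrange multiplier `lam`. -/
def EqSys (ρ χ K x₁ x₂ x₃ lam : ℝ) : Prop :=
  ρ * Real.cos χ * x₂ * x₃ - 2 * K * x₁ * x₂ + (ρ * Real.sin χ - 1) * x₁ * x₃ = lam * x₁ ∧
  ρ * Real.cos χ * x₁ * x₃ - K * (x₁ ^ 2 - x₂ ^ 2) - (ρ * Real.sin χ + 1) * x₂ * x₃ = lam * x₂ ∧
  ρ * Real.cos χ * x₁ * x₂ - (x₂ ^ 2 - x₃ ^ 2)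
      + (1 / 2) * (ρ * Real.sin χ - 1) * (x₁ ^ 2 - x₂ ^ 2) = lam * x₃ ∧
  x₁ ^ 2 + x₂ ^ 2 + x₃ ^ 2 = 1

/-!
Suppose that `K = 0`, `ρ cos χ = 0` and `ρ sin χ = -σ`. The second equilibrium equation then holds
identically on the great circle `x₂ = 0`, and the first one holds there with the multiplier
`-(σ + 1) x₃`, which is the only possible one when `x₁ ≠ 0`. With this multiplier, the remaining two
equations are linear in `x₁²` and `x₃²` with determinant proportional to `5 + 3 σ`, and Cramer's
rule gives both squares. They are realised by real points as soon as they are nonnegative.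
-/

theorem sign_mul_sqrt_sq {ε a : ℝ} (hε : ε = 1 ∨ ε = -1) (ha : 0 ≤ a) : (ε * √a) ^ 2 = a := by
  rw [mul_pow, sq_eq_one_iff.mpr hε, sq_sqrt ha, one_mul]

section GreatCircle

variable {ρ χ σ x z : ℝ}

theorem eqSys_great_circle_iff {lam : ℝ} (hcos : ρ * cos χ = 0) (hsin : ρ * sin χ = -σ) :
    EqSys ρ χ 0 x 0 z lam ↔
      -(σ + 1) * x * z = lam * x ∧
      z ^ 2 - (σ + 1) / 2 * x ^ 2 = lam * z ∧
      x ^ 2 + z ^ 2 = 1 := by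
  have hthird : 0 * x * 0 - (0 ^ 2 - z ^ 2) + 1 / 2 * (-σ - 1) * (x ^ 2 - 0 ^ 2) =
      z ^ 2 - (σ + 1) / 2 * x ^ 2 := by ring
  rw [EqSys, hcos, hsin, hthird, neg_add']
  simp

theorem eqSys_great_circle_iff_sq_eq (hcos : ρ * cos χ = 0) (hsin : ρ * sin χ = -σ)
    (hdet : 5 + 3 * σ ≠ 0) :
    EqSys ρ χ 0 x 0 z (-(σ + 1) * z) ↔
      x ^ 2 = 2 * (σ + 2) / (5 + 3 * σ) ∧ z ^ 2 = (σ + 1) / (5 + 3 * σ) := by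
  rw [eqSys_great_circle_iff hcos hsin, eq_div_iff hdet, eq_div_iff hdet]
  constructor
  · rintro ⟨-, hthird, hsphere⟩
    constructor
    · linear_combination 2 * (σ + 2) * hsphere - 2 * hthird
    · linear_combination (σ + 1) * hsphere + 2 * hthird
  · rintro ⟨hx, hz⟩
    refine ⟨by ring, mul_right_cancel₀ hdet ?_, mul_right_cancel₀ hdet ?_⟩
    · linear_combination (σ + 2) * hz - (σ + 1) / 2 * hx
    · linear_combination hx + hz

end GreatCircle

theorem stmt9_general {ρ χ σ ε₁ ε₃ : ℝ} (hcos : ρ * cos χ = 0) (hsin : ρ * sin χ = -σ)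
    (hσ : -1 ≤ σ ∨ σ ≤ -2) (h1 : ε₁ = 1 ∨ ε₁ = -1) (h3 : ε₃ = 1 ∨ ε₃ = -1) :
    EqSys ρ χ 0
      (ε₁ * √(2 * (σ + 2) / (5 + 3 * σ)))
      0
      (ε₃ * √((σ + 1) / (5 + 3 * σ)))
      (-(σ + 1) * (ε₃ * √((σ + 1) / (5 + 3 * σ)))) := by
  have hdet : 5 + 3 * σ ≠ 0 := by
    rcases hσ with hσ | hσ <;> intro h <;> linarith
  have hx_sq_nonneg : 0 ≤ 2 * (σ + 2) / (5 + 3 * σ) := by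
    rcases hσ with hσ | hσ
    · exact div_nonneg (by linarith) (by linarith)
    · exact div_nonneg_of_nonpos (by linarith) (by linarith)
  have hz_sq_nonneg : 0 ≤ (σ + 1) / (5 + 3 * σ) := by
    rcases hσ with hσ | hσ
    · exact div_nonneg (by linarith) (by linarith)
    · exact div_nonneg_of_nonpos (by linarith) (by linarith)
  exact (eqSys_great_circle_iff_sq_eq hcos hsin hdet).mpr
    ⟨sign_mul_sqrt_sq h1 hx_sq_nonneg, sign_mul_sqrt_sq h3 hz_sq_nonneg⟩

theorem stmt9 (ρ : ℝ) (hρ : 0 < ρ) (ε₁ ε₃ : ℝ)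
    (h1 : ε₁ = 1 ∨ ε₁ = -1) (h3 : ε₃ = 1 ∨ ε₃ = -1) :
    EqSys ρ (-(π / 2)) 0
      (ε₁ * Real.sqrt (2 * (ρ + 2) / (5 + 3 * ρ)))
      0
      (ε₃ * Real.sqrt ((ρ + 1) / (5 + 3 * ρ)))
      (-(ρ + 1) * (ε₃ * Real.sqrt ((ρ + 1) / (5 + 3 * ρ)))) :=
  stmt9_general (by simp) (by simp) (Or.inl (by linarith)) h1 h3
end

section
/- Fix ρ with 0 < ρ < 2 and χ with −π/2 < χ < −π/6. Then there exists K₀ > 0 such that for every K > K₀, the oriented octupolar potential Φₒ(x₁,x₂,x₃) = 3ρcosχ·x₁x₂x₃ + K(x₂²−3x₁²)x₂ + (x₃²−3x₂²)x₃ + (3/2)(ρsinχ−1)(x₁²−x₂²)x₃ has exactly 14 critical points on the unit sphere S², i.e., the set {x ∈ ℝ³ : x₁²+x₂²+x₃² = 1 and ∇Φₒ(x) is a scalar multiple of x} has exactly 14 elements. -/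
/-!
Put `a = ρ cos χ`, `b = ρ sin χ` and write the horizontal part of a vector as `w = x + i y`. Then
`Φₒ = z³ + (3/2) z (Q - |w|²) - K Im w³` with `H + i Q = (a + i b) w²`, and off the vertical axis
criticality of `(x, y, z)` amounts to one azimuthal and one meridional equation. The azimuthal
equation `K Re w³ = z H` determines `z` from `(x, y)`; eliminating `z` leaves a binary sextic form
`2 K² Re w³ · B + H² (Q - |w|²)`, where `B = 2 Re w³ - |w|² Im ((a + i b) w̄)`.

For large `K` the product `Re w³ · B` governs the signs of the sextic. It is positive wherever
`|Re w³|` is large compared with `|w|³`, in particular at the three directions with `Im w³ = 0`,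
because `a² + b² < 4`. It changes sign at the three zeros of `Re w³`, because `B` does not vanish
there when `Re (a + i b)³ ≠ 0`. Hence the sextic has six real zeros. Together with the vertical
axis these give seven lines of critical points, each of which meets the sphere twice.
-/

open Real

/-- The oriented octupolar potential with parameters `(ρ, χ, K)` as a function
on three-dimensional Euclidean space. -/
noncomputable def orientedPot (ρ χ K : ℝ) (x : EuclideanSpace ℝ (Fin 3)) : ℝ :=
  3 * ρ * Real.cos χ * x 0 * x 1 * x 2
    + K * ((x 1) ^ 2 - 3 * (x 0) ^ 2) * x 1
    + ((x 2) ^ 2 - 3 * (x 1) ^ 2) * x 2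
    + (3 / 2) * (ρ * Real.sin χ - 1) * ((x 0) ^ 2 - (x 1) ^ 2) * x 2

open Filter Set

section UnitVectorsOnLines

variable {E : Type*} [NormedAddCommGroup E] [NormedSpace ℝ E]

theorem norm_eq_one_and_mem_span_singleton_iff {v x : E} (hv : v ≠ 0) :
    ‖x‖ = 1 ∧ x ∈ Submodule.span ℝ {v} ↔ x = ‖v‖⁻¹ • v ∨ x = -(‖v‖⁻¹ • v) := by
  have hunit : ‖‖v‖⁻¹ • v‖ = 1 := norm_smul_inv_norm (𝕜 := ℝ) hv
  have hmem : ‖v‖⁻¹ • v ∈ Submodule.span ℝ {v} :=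
    Submodule.smul_mem _ _ (Submodule.mem_span_singleton_self v)
  constructor
  · rintro ⟨hx, hspan⟩
    obtain ⟨c, rfl⟩ := Submodule.mem_span_singleton.mp hspan
    rw [norm_smul, Real.norm_eq_abs] at hx
    rcases eq_or_eq_neg_of_abs_eq (eq_inv_of_mul_eq_one_left hx) with rfl | rfl
    · exact .inl rfl
    · exact .inr (neg_smul _ _)
  · rintro (rfl | rfl)
    · exact ⟨hunit, hmem⟩
    · exact ⟨(norm_neg _).trans hunit, neg_mem hmem⟩

theorem encard_norm_eq_one_and_mem_span {ι : Type*} {v : ι → E} (hv : ∀ i, v i ≠ 0)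
    (hline : ∀ i j, v i ∈ Submodule.span ℝ {v j} → i = j) :
    {x | ‖x‖ = 1 ∧ ∃ i, x ∈ Submodule.span ℝ {v i}}.encard = ENat.card ι + ENat.card ι := by
  set u : ι → E := fun i => ‖v i‖⁻¹ • v i with hu
  have hunits : {x | ‖x‖ = 1 ∧ ∃ i, x ∈ Submodule.span ℝ {v i}} =
      range u ∪ range (-u) := by
    ext x
    simp only [mem_ofPred_eq, ← exists_and_left, norm_eq_one_and_mem_span_singleton_iff (hv _),
      exists_or, mem_union, mem_range, Pi.neg_apply, hu, eq_comm]
  have hspan {i j : ι} {c : ℝ} (h : u i = c • u j) : i = j := by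
    refine hline i j (Submodule.mem_span_singleton.mpr ⟨‖v i‖ * (c * ‖v j‖⁻¹), ?_⟩)
    rw [mul_smul, mul_smul, ← h, smul_inv_smul₀ (norm_ne_zero_iff.mpr (hv i))]
  have hinj : Function.Injective u := fun i j h => hspan (c := 1) (by rw [h, one_smul])
  have hinj_neg : Function.Injective (-u) := fun i j h => hinj (neg_injective h)
  have hdisj : Disjoint (range u) (range (-u)) := by
    rw [Set.disjoint_left]
    rintro _ ⟨i, rfl⟩ ⟨j, h⟩
    obtain rfl : i = j := hspan (c := -1) (by rw [← h, neg_one_smul, Pi.neg_apply])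
    have : IsAddTorsionFree E := .of_isTorsionFree ℝ E
    have hzero : u i = 0 := neg_eq_self.mp h
    simp [hu, hv i] at hzero
  rw [hunits, encard_union_eq hdisj, ← image_univ, hinj.encard_image, ← image_univ,
    hinj_neg.encard_image, encard_univ]

end UnitVectorsOnLines

section SignChanges

theorem exists_mem_Ioo_eq_zero_of_mul_neg {f : ℝ → ℝ} (hf : Continuous f) {x y : ℝ}
    (hxy : x < y) (h : f x * f y < 0) : ∃ z ∈ Ioo x y, f z = 0 := by
  rcases mul_neg_iff.mp h with ⟨hx, hy⟩ | ⟨hx, hy⟩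
  · exact intermediate_value_Ioo' hxy.le hf.continuousOn ⟨hy, hx⟩
  · exact intermediate_value_Ioo hxy.le hf.continuousOn ⟨hx, hy⟩

theorem le_encard_zeros_of_alternating {f : ℝ → ℝ} (hf : Continuous f) {n : ℕ}
    {t : Fin (n + 1) → ℝ} (ht : StrictMono t)
    (halt : ∀ i : Fin n, f (t i.castSucc) * f (t i.succ) < 0) :
    (n : ℕ∞) ≤ {s | f s = 0}.encard := by
  choose z hz hfz using fun i => exists_mem_Ioo_eq_zero_of_mul_neg hf (ht i.castSucc_lt_succ)
    (halt i)
  have hmono : StrictMono z := fun i j hij =>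
    (hz i).2.trans_le ((ht.monotone (Fin.succ_le_castSucc_iff.mpr hij)).trans (hz j).1.le)
  calc (n : ℕ∞) = (range z).encard := by
        rw [← image_univ, hmono.injective.encard_image, encard_univ, ENat.card_eq_coe_fintype_card,
          Fintype.card_fin]
    _ ≤ {s | f s = 0}.encard := encard_le_encard (range_subset_iff.mpr hfz)

theorem eventually_mul_add_pos {u : ℝ} (hu : 0 < u) (v : ℝ) :
    ∀ᶠ m : ℝ in atTop, 0 < m * u + v :=
  (tendsto_atTop_add_const_right _ v (tendsto_id.atTop_mul_const hu)).eventually_gt_atTop 0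

theorem eventually_mul_add_mul_neg {u₁ u₂ : ℝ} (h : u₁ * u₂ < 0) (v₁ v₂ : ℝ) :
    ∀ᶠ m : ℝ in atTop, (m * u₁ + v₁) * (m * u₂ + v₂) < 0 := by
  wlog hpos : 0 < u₁ generalizing u₁ u₂ v₁ v₂
  · have h₂ : 0 < u₂ := pos_of_mul_neg_right h (not_lt.mp hpos)
    filter_upwards [this (mul_comm u₁ u₂ ▸ h) v₂ v₁ h₂] with m hm
    rwa [mul_comm]
  have hneg : 0 < -u₂ := neg_pos.mpr (neg_of_mul_neg_right h hpos.le)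
  filter_upwards [eventually_mul_add_pos hpos v₁, eventually_mul_add_pos hneg (-v₂)] with m h₁ h₂
  exact mul_neg_of_pos_of_neg h₁ (by linarith)

theorem eventually_le_encard_zeros_of_alternating {f g : ℝ → ℝ} (hf : Continuous f)
    (hg : Continuous g) {n : ℕ} {t : Fin (n + 1) → ℝ} (ht : StrictMono t)
    (halt : ∀ i : Fin n, f (t i.castSucc) * f (t i.succ) < 0) :
    ∀ᶠ m : ℝ in atTop, (n : ℕ∞) ≤ {s | m * f s + g s = 0}.encard := by
  filter_upwards [eventually_all.mpr fun i =>
    eventually_mul_add_mul_neg (halt i) (g (t i.castSucc)) (g (t i.succ))] with m hm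
  exact le_encard_zeros_of_alternating ((hf.const_mul m).add hg) ht hm

theorem exists_mem_Ioo_neg_of_hasDerivAt {f : ℝ → ℝ} {f' l r u : ℝ} (hf : HasDerivAt f f' r)
    (hf' : f' ≠ 0) (hr : f r = 0) (hl : l < r) (hu : r < u) : ∃ s ∈ Ioo l u, f s < 0 := by
  by_contra! hnonneg
  have hmin : IsLocalMin f r := by
    filter_upwards [Ioo_mem_nhds hl hu] with s hs
    simpa only [hr] using hnonneg s hs
  exact hf' (hmin.hasDerivAt_eq_zero hf)

end SignChanges

section BinaryForms

variable {R : Type*} [CommRing R]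

/-- The binary cubic form `Re w³`, where `w = x + i y`. -/
def reCubic (x y : R) : R := x ^ 3 - 3 * x * y ^ 2

/-- The binary cubic form `Im w³`, where `w = x + i y`. -/
def imCubic (x y : R) : R := 3 * x ^ 2 * y - y ^ 3

/-- The binary quadratic form `Re ((a + i b) w²)`, where `w = x + i y`. -/
def reQuadratic (a b x y : R) : R := a * (x ^ 2 - y ^ 2) - 2 * b * x * y

/-- The binary quadratic form `Im ((a + i b) w²)`, where `w = x + i y`. -/
def imQuadratic (a b x y : R) : R := 2 * a * x * y + b * (x ^ 2 - y ^ 2)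

/-- The binary cubic form `2 Re w³ - |w|² Im ((a + i b) w̄)`, where `w = x + i y`. Its zeros and
those of `reCubic` are the horizontal directions of the critical points in the limit `K → ∞`. -/
def limitCubic (a b x y : R) : R := 2 * reCubic x y - (x ^ 2 + y ^ 2) * (b * x - a * y)

/-- The binary sextic form whose zeros, for `m = 2 K²`, are the horizontal directions `(x, y)` of
the critical points of the octupolar potential with `a = ρ cos χ` and `b = ρ sin χ`. The
coefficients live in an arbitrary ring so that the form can also be evaluated at polynomials. -/
def directionSextic (a b m x y : R) : R :=
  m * (reCubic x y * limitCubic a b x y)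
    + reQuadratic a b x y ^ 2 * (imQuadratic a b x y - (x ^ 2 + y ^ 2))

theorem reCubic_sq_add_imCubic_sq (x y : R) :
    reCubic x y ^ 2 + imCubic x y ^ 2 = (x ^ 2 + y ^ 2) ^ 3 := by
  unfold reCubic imCubic; ring

/-- The real part of `((a + i b) w²)³ = (a + i b)³ (w³)²`. -/
theorem reCubic_reQuadratic_imQuadratic (a b x y : R) :
    reCubic (reQuadratic a b x y) (imQuadratic a b x y) =
      reCubic a b * (reCubic x y ^ 2 - imCubic x y ^ 2)
        - imCubic a b * (2 * reCubic x y * imCubic x y) := by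
  unfold reCubic imCubic reQuadratic imQuadratic; ring

/-- The imaginary part of `w̄³ · (a + i b) w² = |w|⁴ (a + i b) w̄` turns the second term of
`limitCubic`, multiplied by `|w|²`, into cubics times quadratics. -/
theorem mul_limitCubic (a b x y : R) :
    (x ^ 2 + y ^ 2) * limitCubic a b x y =
      reCubic x y * (2 * (x ^ 2 + y ^ 2) - imQuadratic a b x y)
        + imCubic x y * reQuadratic a b x y := by
  unfold limitCubic reCubic imCubic reQuadratic imQuadratic; ring

theorem reCubic_mul_mul (l x y : R) : reCubic (l * x) (l * y) = l ^ 3 * reCubic x y := by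
  unfold reCubic; ring

theorem reQuadratic_mul_mul (a b l x y : R) :
    reQuadratic a b (l * x) (l * y) = l ^ 2 * reQuadratic a b x y := by
  unfold reQuadratic; ring

theorem directionSextic_mul_mul (a b m l x y : R) :
    directionSextic a b m (l * x) (l * y) = l ^ 6 * directionSextic a b m x y := by
  unfold directionSextic limitCubic reCubic reQuadratic imQuadratic; ring

open Polynomial in
theorem encard_zeros_directionSextic_le [IsDomain R] {a b m s₀ : R}
    (h₀ : directionSextic a b m s₀ 1 ≠ 0) :
    {s | directionSextic a b m s 1 = 0}.encard ≤ 6 := by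
  set p : R[X] := directionSextic (C a) (C b) (C m) X 1 with hp
  have heval (s : R) : p.eval s = directionSextic a b m s 1 := by
    simp [hp, directionSextic, limitCubic, reCubic, reQuadratic, imQuadratic]
  have hp0 : p ≠ 0 := fun h => h₀ (by rw [← heval, h, eval_zero])
  have hdeg : p.natDegree ≤ 6 := by
    simp only [hp, directionSextic, limitCubic, reCubic, reQuadratic, imQuadratic]
    compute_degree
  have hroots : {s | directionSextic a b m s 1 = 0} = p.rootSet R := by
    ext s
    simp [mem_rootSet, hp0, heval]
  rw [hroots, ← (rootSet_finite p R).cast_ncard_eq]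
  exact_mod_cast (ncard_rootSet_le p R).trans hdeg

end BinaryForms

section SexticZeros

variable {a b m x y : ℝ}

theorem imQuadratic_lt (hab : a ^ 2 + b ^ 2 < 4) (hxy : x ^ 2 + y ^ 2 ≠ 0) :
    imQuadratic a b x y < 2 * (x ^ 2 + y ^ 2) := by
  have : 0 < x ^ 2 + y ^ 2 := by positivity
  have hmodulus : reQuadratic a b x y ^ 2 + imQuadratic a b x y ^ 2 =
      (a ^ 2 + b ^ 2) * (x ^ 2 + y ^ 2) ^ 2 := by
    unfold reQuadratic imQuadratic; ring
  refine lt_of_pow_lt_pow_left₀ 2 (by positivity) ?_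
  calc imQuadratic a b x y ^ 2 ≤ (a ^ 2 + b ^ 2) * (x ^ 2 + y ^ 2) ^ 2 :=
        hmodulus ▸ le_add_of_nonneg_left (sq_nonneg _)
    _ < 4 * (x ^ 2 + y ^ 2) ^ 2 := by gcongr
    _ = (2 * (x ^ 2 + y ^ 2)) ^ 2 := by ring

theorem imCubic_ne_zero_of_reCubic_eq_zero (hxy : x ^ 2 + y ^ 2 ≠ 0) (h : reCubic x y = 0) :
    imCubic x y ≠ 0 := by
  intro him
  have hcube := reCubic_sq_add_imCubic_sq x y
  rw [h, him] at hcube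
  exact pow_ne_zero 3 hxy (by linarith)

theorem reQuadratic_ne_zero_of_reCubic_eq_zero (hD : reCubic a b ≠ 0) (hxy : x ^ 2 + y ^ 2 ≠ 0)
    (h : reCubic x y = 0) : reQuadratic a b x y ≠ 0 := by
  intro hH
  have hcube := reCubic_reQuadratic_imQuadratic a b x y
  have hzero : reCubic a b * imCubic x y ^ 2 = 0 := by
    have hvanish : reCubic 0 (imQuadratic a b x y) = 0 := by simp [reCubic]
    rw [hH, h, hvanish] at hcube
    linear_combination hcube
  exact mul_ne_zero hD (pow_ne_zero 2 (imCubic_ne_zero_of_reCubic_eq_zero hxy h)) hzero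

theorem limitCubic_ne_zero_of_reCubic_eq_zero (hD : reCubic a b ≠ 0) (hxy : x ^ 2 + y ^ 2 ≠ 0)
    (h : reCubic x y = 0) : limitCubic a b x y ≠ 0 := by
  refine right_ne_zero_of_mul (a := x ^ 2 + y ^ 2) ?_
  rw [mul_limitCubic, h, zero_mul, zero_add]
  exact mul_ne_zero (imCubic_ne_zero_of_reCubic_eq_zero hxy h)
    (reQuadratic_ne_zero_of_reCubic_eq_zero hD hxy h)

theorem reQuadratic_ne_zero_of_directionSextic_eq_zero (hab : a ^ 2 + b ^ 2 < 4)
    (hD : reCubic a b ≠ 0) (hm : m ≠ 0) (hxy : x ^ 2 + y ^ 2 ≠ 0)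
    (h : directionSextic a b m x y = 0) : reQuadratic a b x y ≠ 0 := by
  intro hH
  have hprod : reCubic x y * limitCubic a b x y = 0 := by
    rw [directionSextic, hH] at h
    simpa [hm] using h
  have hsq : reCubic x y ^ 2 * (2 * (x ^ 2 + y ^ 2) - imQuadratic a b x y) = 0 := by
    have hmul := mul_limitCubic a b x y
    rw [hH] at hmul
    linear_combination (x ^ 2 + y ^ 2) * hprod - reCubic x y * hmul
  have hre : reCubic x y = 0 := by
    simpa [sub_ne_zero.mpr (imQuadratic_lt hab hxy).ne'] using hsq
  exact reQuadratic_ne_zero_of_reCubic_eq_zero hD hxy hre hH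

theorem reCubic_mul_limitCubic_pos
    (h : 4 * imCubic x y ^ 2 < (4 - (a ^ 2 + b ^ 2)) * (x ^ 2 + y ^ 2) ^ 3) :
    0 < reCubic x y * limitCubic a b x y := by
  have hlin : (b * x - a * y) ^ 2 ≤ (a ^ 2 + b ^ 2) * (x ^ 2 + y ^ 2) := by
    linarith [sq_nonneg (a * x + b * y)]
  have hsmall : ((x ^ 2 + y ^ 2) * (b * x - a * y)) ^ 2 < (2 * reCubic x y) ^ 2 := by
    calc ((x ^ 2 + y ^ 2) * (b * x - a * y)) ^ 2
        = (x ^ 2 + y ^ 2) ^ 2 * (b * x - a * y) ^ 2 := mul_pow _ _ _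
      _ ≤ (x ^ 2 + y ^ 2) ^ 2 * ((a ^ 2 + b ^ 2) * (x ^ 2 + y ^ 2)) := by gcongr
      _ < (2 * reCubic x y) ^ 2 := by linarith [reCubic_sq_add_imCubic_sq x y]
  have habs := sq_lt_sq.mp hsmall
  have hre : 0 < |reCubic x y| := by
    have := (abs_nonneg _).trans_lt habs
    rwa [abs_mul, abs_two, mul_pos_iff_of_pos_left two_pos] at this
  have hprod := mul_lt_mul_of_pos_left habs hre
  rw [← abs_mul, ← abs_mul] at hprod
  unfold limitCubic
  linarith [le_abs_self (reCubic x y * ((x ^ 2 + y ^ 2) * (b * x - a * y))),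
    abs_of_nonneg (show 0 ≤ reCubic x y * (2 * reCubic x y) by nlinarith)]

theorem reCubic_mul_limitCubic_pos_of_imCubic_eq_zero (hab : a ^ 2 + b ^ 2 < 4)
    (hxy : x ^ 2 + y ^ 2 ≠ 0) (h : imCubic x y = 0) : 0 < reCubic x y * limitCubic a b x y := by
  have hN : 0 < x ^ 2 + y ^ 2 := by positivity
  have hδ : 0 < 4 - (a ^ 2 + b ^ 2) := sub_pos.mpr hab
  refine reCubic_mul_limitCubic_pos ?_
  rw [h, zero_pow two_ne_zero, mul_zero]
  exact mul_pos hδ (pow_pos hN 3)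

theorem reCubic_mul_limitCubic_pos_of_le {s : ℝ}
    (hs : 36 ≤ (4 - (a ^ 2 + b ^ 2)) * s ^ 2) : 0 < reCubic s 1 * limitCubic a b s 1 := by
  have hδ : 0 < 4 - (a ^ 2 + b ^ 2) := pos_of_mul_pos_left (by linarith) (sq_nonneg s)
  refine reCubic_mul_limitCubic_pos ?_
  calc 4 * imCubic s 1 ^ 2 < 36 * (s ^ 2 + 1) ^ 2 := by
        unfold imCubic
        nlinarith [sq_nonneg s]
    _ ≤ (4 - (a ^ 2 + b ^ 2)) * (s ^ 2 + 1) * (s ^ 2 + 1) ^ 2 := by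
        gcongr
        linarith
    _ = (4 - (a ^ 2 + b ^ 2)) * (s ^ 2 + 1 ^ 2) ^ 3 := by ring

theorem exists_mem_Ioo_reCubic_mul_limitCubic_neg {l r u : ℝ} (hD : reCubic a b ≠ 0)
    (hr : reCubic r 1 = 0) (hl : l < r) (hu : r < u) :
    ∃ s ∈ Ioo l u, reCubic s 1 * limitCubic a b s 1 < 0 := by
  have hre : HasDerivAt (fun s : ℝ => reCubic s 1) (3 * r ^ 2 - 3) r := by
    unfold reCubic
    simpa using (hasDerivAt_pow 3 r).fun_sub ((hasDerivAt_id r).const_mul 3)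
  have hre' : 3 * r ^ 2 - 3 ≠ 0 := by
    intro h
    have hr2 : r ^ 2 = 1 := by linarith
    have hr0 : r = 0 := by
      unfold reCubic at hr
      linear_combination r / 2 * hr2 - hr / 2
    norm_num [hr0] at hr2
  have hlim : DifferentiableAt ℝ (fun s => limitCubic a b s 1) r := by
    unfold limitCubic reCubic; fun_prop
  have hprod := hre.mul hlim.hasDerivAt
  rw [hr, zero_mul, add_zero] at hprod
  refine exists_mem_Ioo_neg_of_hasDerivAt hprod (mul_ne_zero hre' ?_) ?_ hl hu
  · exact limitCubic_ne_zero_of_reCubic_eq_zero hD (by positivity) hr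
  · simp [hr]

theorem exists_alternating_reCubic_mul_limitCubic (hab : a ^ 2 + b ^ 2 < 4)
    (hD : reCubic a b ≠ 0) :
    ∃ t : Fin 7 → ℝ, StrictMono t ∧ ∀ i : Fin 6,
      (reCubic (t i.castSucc) 1 * limitCubic a b (t i.castSucc) 1) *
        (reCubic (t i.succ) 1 * limitCubic a b (t i.succ) 1) < 0 := by
  -- With `p = 1 / √3`, the zeros `-3 p, 0, 3 p` of `Re (s + i)³` interlace the zeros `± p` of
  -- `Im (s + i)³`.
  obtain ⟨p, hp, hp2⟩ : ∃ p : ℝ, 0 < p ∧ 3 * p ^ 2 = 1 :=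
    ⟨√(1 / 3), by positivity, by rw [sq_sqrt (by norm_num)]; norm_num⟩
  obtain ⟨T, hT, hT2⟩ : ∃ T : ℝ, 3 * p < T ∧ 36 ≤ (4 - (a ^ 2 + b ^ 2)) * T ^ 2 := by
    have hδ : 0 < 4 - (a ^ 2 + b ^ 2) := by linarith
    have hlarge : 36 ≤ (4 - (a ^ 2 + b ^ 2)) * (36 / (4 - (a ^ 2 + b ^ 2))) := by
      rw [mul_div_cancel₀ _ hδ.ne']
    have h9 : 9 ≤ 36 / (4 - (a ^ 2 + b ^ 2)) := by
      rw [le_div_iff₀ hδ]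
      linarith [sq_nonneg a, sq_nonneg b]
    refine ⟨36 / (4 - (a ^ 2 + b ^ 2)), by nlinarith, hlarge.trans ?_⟩
    gcongr
    nlinarith
  have hroot {r : ℝ} (hr : r * (r ^ 2 - 9 * p ^ 2) = 0) : reCubic r 1 = 0 := by
    unfold reCubic
    linear_combination hr + 3 * r * hp2
  obtain ⟨s₁, ⟨hl₁, hu₁⟩, h₁⟩ := exists_mem_Ioo_reCubic_mul_limitCubic_neg (l := -T) (r := -(3 * p))
    (u := -p) hD (hroot (by ring)) (by linarith) (by linarith)
  obtain ⟨s₂, ⟨hl₂, hu₂⟩, h₂⟩ := exists_mem_Ioo_reCubic_mul_limitCubic_neg (l := -p) (r := 0)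
    (u := p) hD (hroot (by ring)) (by linarith) (by linarith)
  obtain ⟨s₃, ⟨hl₃, hu₃⟩, h₃⟩ := exists_mem_Ioo_reCubic_mul_limitCubic_neg (l := p) (r := 3 * p)
    (u := T) hD (hroot (by ring)) (by linarith) (by linarith)
  refine ⟨![-T, s₁, -p, s₂, p, s₃, T], ?_, ?_⟩
  · rw [Fin.strictMono_iff_lt_succ]
    simp [Fin.forall_fin_succ, *]
  · have hT₁ := reCubic_mul_limitCubic_pos_of_le (a := a) (b := b) (s := -T) (by rwa [neg_sq])
    have hT₂ := reCubic_mul_limitCubic_pos_of_le hT2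
    have hp₁ := reCubic_mul_limitCubic_pos_of_imCubic_eq_zero (x := -p) (y := 1) hab
      (by positivity) (by unfold imCubic; linarith)
    have hp₂ := reCubic_mul_limitCubic_pos_of_imCubic_eq_zero (x := p) (y := 1) hab
      (by positivity) (by unfold imCubic; linarith)
    simp [Fin.forall_fin_succ, mul_neg_of_pos_of_neg, mul_neg_of_neg_of_pos, *]

theorem eventually_encard_zeros_directionSextic (hab : a ^ 2 + b ^ 2 < 4)
    (hD : reCubic a b ≠ 0) :
    ∀ᶠ m in atTop, {s : ℝ | directionSextic a b m s 1 = 0}.encard = 6 := by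
  obtain ⟨t, ht, halt⟩ := exists_alternating_reCubic_mul_limitCubic hab hD
  have hf : Continuous fun s : ℝ => reCubic s 1 * limitCubic a b s 1 := by
    unfold limitCubic reCubic; fun_prop
  have hg : Continuous fun s : ℝ =>
      reQuadratic a b s 1 ^ 2 * (imQuadratic a b s 1 - (s ^ 2 + 1 ^ 2)) := by
    unfold reQuadratic imQuadratic; fun_prop
  filter_upwards [eventually_le_encard_zeros_of_alternating hf hg ht halt,
    eventually_mul_add_mul_neg (halt 0) (reQuadratic a b (t 0) 1 ^ 2 *
      (imQuadratic a b (t 0) 1 - (t 0 ^ 2 + 1 ^ 2))) 0] with m hle hneg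
  exact le_antisymm (encard_zeros_directionSextic_le (left_ne_zero_of_mul hneg.ne)) hle

theorem eventually_directionSextic_one_zero_pos (hab : a ^ 2 + b ^ 2 < 4) :
    ∀ᶠ m in atTop, 0 < directionSextic a b m 1 0 :=
  eventually_mul_add_pos (reCubic_mul_limitCubic_pos_of_imCubic_eq_zero hab (by norm_num)
    (by simp [imCubic])) _

end SexticZeros

section CriticalPoints

theorem reCubic_cos_sin (θ : ℝ) : reCubic (cos θ) (sin θ) = cos (3 * θ) := by
  rw [reCubic, cos_three_mul]
  linear_combination (-3 * cos θ) * sin_sq_add_cos_sq θ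

theorem gradient_orientedPot (ρ χ K : ℝ) (v : EuclideanSpace ℝ (Fin 3)) :
    gradient (orientedPot ρ χ K) v = !₂[
      3 * (ρ * cos χ * v 1 * v 2 - 2 * K * v 0 * v 1 + (ρ * sin χ - 1) * v 0 * v 2),
      3 * (ρ * cos χ * v 0 * v 2 + K * (v 1 ^ 2 - v 0 ^ 2) - (ρ * sin χ + 1) * v 1 * v 2),
      3 * (v 2 ^ 2 + (imQuadratic (ρ * cos χ) (ρ * sin χ) (v 0) (v 1)
        - (v 0 ^ 2 + v 1 ^ 2)) / 2)] := by
  refine HasGradientAt.gradient ?_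
  rw [hasGradientAt_iff_hasFDerivAt]
  have hcoord (i : Fin 3) : HasFDerivAt (fun w : EuclideanSpace ℝ (Fin 3) => w i)
      (EuclideanSpace.proj i : EuclideanSpace ℝ (Fin 3) →L[ℝ] ℝ) v :=
    (EuclideanSpace.proj i : EuclideanSpace ℝ (Fin 3) →L[ℝ] ℝ).hasFDerivAt
  have h₀ := hcoord 0
  have h₁ := hcoord 1
  have h₂ := hcoord 2
  have hderiv := (((((h₀.const_mul (3 * ρ * cos χ)).mul h₁).mul h₂).add
    ((((h₁.pow 2).sub ((h₀.pow 2).const_mul 3)).const_mul K).mul h₁)).add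
    (((h₂.pow 2).sub ((h₁.pow 2).const_mul 3)).mul h₂)).add
    ((((h₀.pow 2).sub (h₁.pow 2)).const_mul (3 / 2 * (ρ * sin χ - 1))).mul h₂)
  refine hderiv.congr_fderiv ?_
  ext w
  simp [PiLp.inner_apply, Fin.sum_univ_three, imQuadratic]
  ring

variable {a b K x y z : ℝ}

/-- The equations `∇Φₒ = c v` at `v = (x, y, z)`, with the multiplier `c` existentially quantified
and `a = ρ cos χ`, `b = ρ sin χ`. -/
def IsCriticalDirection (a b K x y z : ℝ) : Prop :=
  ∃ c : ℝ, 3 * (a * y * z - 2 * K * x * y + (b - 1) * x * z) = c * x ∧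
    3 * (a * x * z + K * (y ^ 2 - x ^ 2) - (b + 1) * y * z) = c * y ∧
    3 * (z ^ 2 + (imQuadratic a b x y - (x ^ 2 + y ^ 2)) / 2) = c * z

theorem exists_gradient_orientedPot_eq_smul_iff (ρ χ K : ℝ) (v : EuclideanSpace ℝ (Fin 3)) :
    (∃ c : ℝ, gradient (orientedPot ρ χ K) v = c • v) ↔
      IsCriticalDirection (ρ * cos χ) (ρ * sin χ) K (v 0) (v 1) (v 2) := by
  refine exists_congr fun c => ?_
  rw [gradient_orientedPot, PiLp.ext_iff]
  simp [Fin.forall_fin_succ]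

theorem isCriticalDirection_iff_azimuthal_and_meridional (hxy : x ^ 2 + y ^ 2 ≠ 0) :
    IsCriticalDirection a b K x y z ↔
      K * reCubic x y = z * reQuadratic a b x y ∧
      z * (z * (imQuadratic a b x y - (x ^ 2 + y ^ 2)) - K * imCubic x y) =
        (x ^ 2 + y ^ 2) * (z ^ 2 + (imQuadratic a b x y - (x ^ 2 + y ^ 2)) / 2) := by
  unfold IsCriticalDirection reCubic imCubic reQuadratic imQuadratic
  constructor
  · rintro ⟨c, h₀, h₁, h₂⟩
    constructor
    · linear_combination y / 3 * h₀ - x / 3 * h₁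
    · linear_combination z * x / 3 * h₀ + z * y / 3 * h₁ - (x ^ 2 + y ^ 2) / 3 * h₂
  · rintro ⟨hazim, hmerid⟩
    refine ⟨3 * (x * (a * y * z - 2 * K * x * y + (b - 1) * x * z) +
      y * (a * x * z + K * (y ^ 2 - x ^ 2) - (b + 1) * y * z)) / (x ^ 2 + y ^ 2), ?_, ?_, ?_⟩
    · field_simp
      linear_combination y * hazim
    · field_simp
      linear_combination -x * hazim
    · field_simp
      linear_combination -2 * hmerid

theorem mul_directionSextic_of_azimuthal (hazim : K * reCubic x y = z * reQuadratic a b x y) :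
    (x ^ 2 + y ^ 2) * directionSextic a b (2 * K ^ 2) x y =
      2 * reQuadratic a b x y ^ 2 *
        ((x ^ 2 + y ^ 2) * (z ^ 2 + (imQuadratic a b x y - (x ^ 2 + y ^ 2)) / 2)
          - z * (z * (imQuadratic a b x y - (x ^ 2 + y ^ 2)) - K * imCubic x y)) := by
  have hlim := mul_limitCubic a b x y
  unfold directionSextic
  linear_combination 2 * K ^ 2 * reCubic x y * hlim
    + 2 * ((2 * (x ^ 2 + y ^ 2) - imQuadratic a b x y)
        * (K * reCubic x y + z * reQuadratic a b x y)
      + K * reQuadratic a b x y * imCubic x y) * hazim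

theorem isCriticalDirection_iff (hK : K ≠ 0) (hab : a ^ 2 + b ^ 2 < 4) (hD : reCubic a b ≠ 0) :
    IsCriticalDirection a b K x y z ↔
      directionSextic a b (2 * K ^ 2) x y = 0 ∧ K * reCubic x y = z * reQuadratic a b x y := by
  by_cases hxy : x ^ 2 + y ^ 2 = 0
  · obtain ⟨rfl, rfl⟩ : x = 0 ∧ y = 0 := by
      constructor <;> nlinarith [sq_nonneg x, sq_nonneg y]
    refine iff_of_true ⟨3 * z, ?_⟩ ?_
    · simp [imQuadratic]; ring
    · simp [directionSextic, reCubic, reQuadratic]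
  rw [isCriticalDirection_iff_azimuthal_and_meridional hxy, and_comm]
  refine and_congr_left fun hazim => ?_
  have helim := mul_directionSextic_of_azimuthal hazim
  constructor
  · intro hmerid
    rw [hmerid, sub_self, mul_zero] at helim
    exact (mul_eq_zero.mp helim).resolve_left hxy
  · intro hsextic
    have hquad := reQuadratic_ne_zero_of_directionSextic_eq_zero hab hD (by positivity) hxy hsextic
    rw [hsextic, mul_zero] at helim
    have hfactor := (mul_eq_zero.mp helim.symm).resolve_left (by positivity)
    exact (sub_eq_zero.mp hfactor).symm

theorem isCriticalDirection_zero_iff (hK : K ≠ 0) (hab : a ^ 2 + b ^ 2 < 4)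
    (hD : reCubic a b ≠ 0) (hinf : directionSextic a b (2 * K ^ 2) 1 0 ≠ 0) :
    IsCriticalDirection a b K x 0 z ↔ x = 0 := by
  rw [isCriticalDirection_iff hK hab hD]
  have hscale := directionSextic_mul_mul a b (2 * K ^ 2) x 1 0
  rw [mul_one, mul_zero] at hscale
  rw [hscale, mul_eq_zero_iff_right hinf, pow_eq_zero_iff (by norm_num), and_iff_left_iff_imp]
  rintro rfl
  simp [reCubic, reQuadratic]

theorem isCriticalDirection_iff_of_ne_zero (hK : K ≠ 0) (hab : a ^ 2 + b ^ 2 < 4)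
    (hD : reCubic a b ≠ 0) (hy : y ≠ 0) :
    IsCriticalDirection a b K x y z ↔
      directionSextic a b (2 * K ^ 2) (x / y) 1 = 0 ∧
      z = y * (K * reCubic (x / y) 1 / reQuadratic a b (x / y) 1) := by
  obtain ⟨s, rfl⟩ : ∃ s, x = y * s := ⟨x / y, (mul_div_cancel₀ _ hy).symm⟩
  have hsextic := directionSextic_mul_mul a b (2 * K ^ 2) y s 1
  have hre := reCubic_mul_mul y s 1
  have hqu := reQuadratic_mul_mul a b y s 1
  rw [mul_one] at hsextic hre hqu
  rw [isCriticalDirection_iff hK hab hD, hsextic, hre, hqu, mul_div_cancel_left₀ s hy,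
    mul_eq_zero_iff_left (pow_ne_zero 6 hy)]
  refine and_congr_right fun hroot => ?_
  have hquad := reQuadratic_ne_zero_of_directionSextic_eq_zero hab hD (by positivity)
    (by positivity) hroot
  have hfactor : K * (y ^ 3 * reCubic s 1) = y ^ 2 * (y * (K * reCubic s 1)) := by ring
  rw [hfactor, mul_left_comm z, mul_right_inj' (pow_ne_zero 2 hy), mul_div_assoc',
    eq_div_iff hquad, eq_comm]

/-- A vector spanning the line of critical points with index `q`: the vertical axis for
`q = none`, and the line over the horizontal direction `(s, 1)` for `q = some s`. The quotient
takes the junk value `0` when `reQuadratic a b s 1 = 0`, which happens at no zero of the sextic. -/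
noncomputable def criticalVector (a b K : ℝ) : Option ℝ → EuclideanSpace ℝ (Fin 3)
  | none => !₂[0, 0, 1]
  | some s => !₂[s, 1, K * reCubic s 1 / reQuadratic a b s 1]

theorem criticalVector_ne_zero (q : Option ℝ) : criticalVector a b K q ≠ 0 := by
  cases q with
  | none => intro h; simpa [criticalVector] using congrArg (· 2) h
  | some s => intro h; simpa [criticalVector] using congrArg (· 1) h

theorem mem_span_criticalVector_none_iff {v : EuclideanSpace ℝ (Fin 3)} :
    v ∈ Submodule.span ℝ {criticalVector a b K none} ↔ v 0 = 0 ∧ v 1 = 0 := by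
  rw [Submodule.mem_span_singleton]
  constructor
  · rintro ⟨c, rfl⟩
    simp [criticalVector]
  · rintro ⟨h₀, h₁⟩
    refine ⟨v 2, ?_⟩
    ext i
    fin_cases i <;> simp [criticalVector, h₀, h₁]

theorem mem_span_criticalVector_some_iff {s : ℝ} {v : EuclideanSpace ℝ (Fin 3)} :
    v ∈ Submodule.span ℝ {criticalVector a b K (some s)} ↔
      v 0 = v 1 * s ∧ v 2 = v 1 * (K * reCubic s 1 / reQuadratic a b s 1) := by
  rw [Submodule.mem_span_singleton]
  constructor
  · rintro ⟨c, rfl⟩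
    simp [criticalVector]
  · rintro ⟨h₀, h₂⟩
    refine ⟨v 1, ?_⟩
    ext i
    fin_cases i <;> simp [criticalVector, h₀, h₂]

theorem eq_of_criticalVector_mem_span {q q' : Option ℝ}
    (h : criticalVector a b K q ∈ Submodule.span ℝ {criticalVector a b K q'}) : q = q' := by
  rcases q with _ | s <;> rcases q' with _ | s'
  · rfl
  · simpa [criticalVector] using (mem_span_criticalVector_some_iff.mp h).2
  · simpa [criticalVector] using (mem_span_criticalVector_none_iff.mp h).2
  · simpa [criticalVector] using (mem_span_criticalVector_some_iff.mp h).1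

theorem isCriticalDirection_iff_mem_span (hK : K ≠ 0) (hab : a ^ 2 + b ^ 2 < 4)
    (hD : reCubic a b ≠ 0) (hinf : directionSextic a b (2 * K ^ 2) 1 0 ≠ 0)
    (v : EuclideanSpace ℝ (Fin 3)) :
    IsCriticalDirection a b K (v 0) (v 1) (v 2) ↔
      ∃ q : Option {s // directionSextic a b (2 * K ^ 2) s 1 = 0},
        v ∈ Submodule.span ℝ {criticalVector a b K (q.map (↑))} := by
  simp only [Option.exists, Option.map_none, Option.map_some, mem_span_criticalVector_none_iff,
    mem_span_criticalVector_some_iff]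
  by_cases hy : v 1 = 0
  · rw [hy, isCriticalDirection_zero_iff hK hab hD hinf]
    simp +contextual
  · rw [isCriticalDirection_iff_of_ne_zero hK hab hD hy]
    have hslope (s : ℝ) : v 0 = v 1 * s ↔ v 0 / v 1 = s := by
      rw [div_eq_iff hy, mul_comm]
    simp [hy, hslope]

theorem encard_criticalPoints (ρ χ : ℝ) {K : ℝ} (hK : K ≠ 0)
    (hab : (ρ * cos χ) ^ 2 + (ρ * sin χ) ^ 2 < 4) (hD : reCubic (ρ * cos χ) (ρ * sin χ) ≠ 0)
    (hinf : directionSextic (ρ * cos χ) (ρ * sin χ) (2 * K ^ 2) 1 0 ≠ 0) :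
    {x : EuclideanSpace ℝ (Fin 3) |
        (x 0) ^ 2 + (x 1) ^ 2 + (x 2) ^ 2 = 1 ∧
        ∃ c : ℝ, gradient (orientedPot ρ χ K) x = c • x}.encard =
      2 * ({s | directionSextic (ρ * cos χ) (ρ * sin χ) (2 * K ^ 2) s 1 = 0}.encard + 1) := by
  have hnorm (x : EuclideanSpace ℝ (Fin 3)) :
      (x 0) ^ 2 + (x 1) ^ 2 + (x 2) ^ 2 = 1 ↔ ‖x‖ = 1 := by
    rw [← pow_eq_one_iff_of_nonneg (norm_nonneg x) two_ne_zero, EuclideanSpace.real_norm_sq_eq,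
      Fin.sum_univ_three]
  simp only [hnorm, exists_gradient_orientedPot_eq_smul_iff,
    isCriticalDirection_iff_mem_span hK hab hD hinf]
  rw [encard_norm_eq_one_and_mem_span (fun _ => criticalVector_ne_zero _) (fun q q' h =>
    Option.map_injective Subtype.val_injective (eq_of_criticalVector_mem_span h)), ← two_mul,
    ENat.card_congr (Equiv.optionEquivSumPUnit.{0} _), ENat.card_sum,
    ENat.card_eq_one_iff_unique.mpr ⟨PUnit.instUnique⟩]
  rfl

end CriticalPoints

theorem stmt14_general (ρ χ : ℝ) (hρ : |ρ| < 2) (hρ0 : ρ ≠ 0) (hχ : cos (3 * χ) ≠ 0) :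
    ∃ K₀ > (0 : ℝ), ∀ K, K₀ < |K| →
      {x : EuclideanSpace ℝ (Fin 3) |
        (x 0) ^ 2 + (x 1) ^ 2 + (x 2) ^ 2 = 1 ∧
        ∃ c : ℝ, gradient (orientedPot ρ χ K) x = c • x}.encard = 14 := by
  have hab : (ρ * cos χ) ^ 2 + (ρ * sin χ) ^ 2 < 4 := by
    calc (ρ * cos χ) ^ 2 + (ρ * sin χ) ^ 2 = |ρ| ^ 2 := by
          rw [sq_abs]; linear_combination ρ ^ 2 * cos_sq_add_sin_sq χ
      _ < 2 ^ 2 := by gcongr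
      _ = 4 := by norm_num
  have hD : reCubic (ρ * cos χ) (ρ * sin χ) ≠ 0 := by
    rw [reCubic_mul_mul, reCubic_cos_sin]
    exact mul_ne_zero (pow_ne_zero 3 hρ0) hχ
  obtain ⟨M, hM⟩ := eventually_atTop.mp ((eventually_encard_zeros_directionSextic hab hD).and
    (eventually_directionSextic_one_zero_pos hab))
  refine ⟨max M 1, by positivity, fun K hK => ?_⟩
  obtain ⟨hKM, hK1⟩ := max_lt_iff.mp hK
  obtain ⟨hsix, hinf⟩ := hM (2 * K ^ 2) (by nlinarith [sq_abs K])
  rw [encard_criticalPoints ρ χ (abs_pos.mp (one_pos.trans hK1)) hab hD hinf.ne', hsix]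
  norm_num

theorem stmt14 (ρ χ : ℝ) (hρ : 0 < ρ) (hρ2 : ρ < 2)
    (hχ1 : -(π / 2) < χ) (hχ2 : χ < -(π / 6)) :
    ∃ K₀ > (0 : ℝ), ∀ K > K₀,
      {x : EuclideanSpace ℝ (Fin 3) |
        (x 0) ^ 2 + (x 1) ^ 2 + (x 2) ^ 2 = 1 ∧
        ∃ c : ℝ, gradient (orientedPot ρ χ K) x = c • x}.encard = 14 := by
  have hcos : cos (3 * χ) ≠ 0 := by
    rw [← cos_neg]
    exact (cos_neg_of_pi_div_two_lt_of_lt (by linarith) (by linarith)).ne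
  obtain ⟨K₀, hK₀, h⟩ := stmt14_general ρ χ (abs_lt.mpr ⟨by linarith, hρ2⟩) hρ.ne' hcos
  exact ⟨K₀, hK₀, fun K hK => h K (hK.trans_le (le_abs_self K))⟩
end
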